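/- Let Q_8 = {±1, ±i, ±j, ±k} be the quaternion group of order 8 and let H_i = ⟨i⟩, H_j = ⟨j⟩, H_k = ⟨k⟩ be its three cyclic subgroups of order 4, each containing the common subgroup {1, −1} of order 2. Let A be the amalgamated free product of H_i, H_j, H_k over {1, −1} — equivalently, the group with presentation ⟨i, j, k | i⁴ = 1, i² = j² = k²⟩, the pushout of the three inclusions C_2 → C_4 — and let p : A → Q_8 be the canonical homomorphism induced by the inclusions of H_i, H_j, H_k into Q_8. Then p is surjective and Ker p is a free group of rank 3. -/

import Mathlib

/-- The relators `i⁴`, `i²j⁻²`, `i²k⁻²` of the presentation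
`⟨i, j, k ∣ i⁴ = 1, i² = j² = k²⟩` (generators indexed by `Fin 3`). -/
def q8Rels : Set (FreeGroup (Fin 3)) :=
  {FreeGroup.of 0 ^ 4,
   FreeGroup.of 0 ^ 2 * (FreeGroup.of 1 ^ 2)⁻¹,
   FreeGroup.of 0 ^ 2 * (FreeGroup.of 2 ^ 2)⁻¹}

/-- The amalgamated free product `A = C₄ ∗_{C₂} C₄ ∗_{C₂} C₄`, presented as
`⟨i, j, k ∣ i⁴ = 1, i² = j² = k²⟩`: the pushout of the three inclusions `C₂ → C₄`. -/
abbrev AmalgQ8 : Type := PresentedGroup q8Rels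

/-!
The method is Reidemeister–Schreier, phrased through the Kaloujnine–Krasner embedding: if `N` is
the kernel of a surjection `G → Q` with transversal `σ`, then `g` is determined by its image in `Q`
and by the function `x ↦ (σ x)⁻¹ * g * σ (g⁻¹ x)` from `Q` to `N`, and this embeds `G` in `N ≀ᵣ Q`.
Conversely, a homomorphism from `G` to `D ≀ᵣ Q` that satisfies the Schreier identities for some map
`D → N` on generators of `G` identifies `N` with `D`, provided that `D → N → D` is the identity.

Let `z` be the common square of the generators of `A`, and index these by `ℤ / 3`. With the
transversal `1, i, j, k, z, zi, zj, zk`, the values of the function attached to the `g`-th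
generator `s g` are powers of the single element `s (g - 1) * s g * s (g + 1)`. These three elements
form a free basis of the kernel: sending `s g` to the wreath product element with the corresponding
powers of the `g`-th letter of a free group respects the relations of `A`.
-/

open RegularWreathProduct

section WreathProduct

variable {G D Q : Type*} [Group G] [Group D] [Group Q]

/-- The base coordinate at `1` of a homomorphism to a wreath product `D ≀ᵣ Q`, which is
multiplicative on the kernel of the induced homomorphism to `Q`. -/
def kerToBase (ρ : G →* D ≀ᵣ Q) : (rightHom.comp ρ).ker →* D where
  toFun g := (ρ g).left 1
  map_one' := by simp
  map_mul' g h := by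
    have hg : (ρ g).right = 1 := g.2
    simp [hg]

/-- The identity relating `g` to the base coordinates of its image under `ρ : G →* D ≀ᵣ Q`, where
`σ` plays the role of a transversal of the kernel of `G → Q` and `ψ` that of the inclusion of this
kernel. -/
def SchreierIdentity (ρ : G →* D ≀ᵣ Q) (ψ : D →* G) (σ : Q → G) (g : G) : Prop :=
  ∀ x, σ x * ψ ((ρ g).left x) = g * σ ((ρ g).right⁻¹ * x)

theorem schreierIdentity_of_closure_eq_top {ρ : G →* D ≀ᵣ Q} {ψ : D →* G} {σ : Q → G} {S : Set G}
    (hS : Subgroup.closure S = ⊤) (h : ∀ g ∈ S, SchreierIdentity ρ ψ σ g) (g : G) :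
    SchreierIdentity ρ ψ σ g := by
  have hg : g ∈ Subgroup.closure S := hS ▸ Subgroup.mem_top g
  induction hg using Subgroup.closure_induction with
  | mem g hg => exact h g hg
  | one => intro x; simp
  | mul g g' _ _ hg hg' =>
    intro x
    calc σ x * ψ ((ρ (g * g')).left x)
        = σ x * ψ ((ρ g).left x) * ψ ((ρ g').left ((ρ g).right⁻¹ * x)) := by simp [mul_assoc]
      _ = g * g' * σ ((ρ (g * g')).right⁻¹ * x) := by
        rw [hg x, mul_assoc, hg' ((ρ g).right⁻¹ * x)]
        simp [mul_assoc]
  | inv g _ hg =>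
    intro x
    have hgx : σ ((ρ g).right * x) * ψ ((ρ g).left ((ρ g).right * x)) = g * σ x := by
      simpa using hg ((ρ g).right * x)
    simp [mul_inv_eq_iff_eq_mul, mul_assoc, hgx]

theorem comp_kerToBase_eq_id {ρ : G →* D ≀ᵣ Q} {ψ : D →* (rightHom.comp ρ).ker} {σ : Q → G}
    (hσ : σ 1 = 1) (h : ∀ g, SchreierIdentity ρ ((Subgroup.subtype _).comp ψ) σ g) :
    ψ.comp (kerToBase ρ) = MonoidHom.id (rightHom.comp ρ).ker := by
  ext g
  have hg : (ρ g).right = 1 := g.2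
  simpa [hσ, hg, kerToBase] using h g 1

/-- The kernel of `G → Q` is isomorphic to the base group of a wreath product to which `G` maps by
a homomorphism satisfying the Schreier identities on a generating set. -/
def kerEquivBase (ρ : G →* D ≀ᵣ Q) (ψ : D →* (rightHom.comp ρ).ker) {σ : Q → G} {S : Set G}
    (hS : Subgroup.closure S = ⊤) (hσ : σ 1 = 1)
    (h : ∀ g ∈ S, SchreierIdentity ρ ((Subgroup.subtype _).comp ψ) σ g)
    (hψ : (kerToBase ρ).comp ψ = MonoidHom.id D) : (rightHom.comp ρ).ker ≃* D :=
  MonoidHom.toMulEquiv (kerToBase ρ) ψ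
    (comp_kerToBase_eq_id hσ (schreierIdentity_of_closure_eq_top hS h)) hψ

end WreathProduct

namespace AmalgQ8

open QuaternionGroup

theorem commute_a_natCast {n : ℕ} (q : QuaternionGroup n) : Commute q (a (n : ZMod (2 * n))) := by
  have natCast_add_self : (n : ZMod (2 * n)) + n = 0 := by
    rw [← Nat.cast_add, ← two_mul, ZMod.natCast_self]
  rcases q with i | i
  · exact congrArg a (add_comm _ _)
  · refine congrArg xa (eq_sub_of_add_eq ?_)
    rw [add_assoc, natCast_add_self, add_zero]

/-- The elements `i`, `j`, `k` of `Q₈`. With this choice `i * j * k = 1`, unlike the usual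
convention `i * j * k = -1`. -/
def quatUnit : Fin 3 → QuaternionGroup 2 := ![a 1, xa 0, xa 1]

theorem quatUnit_sq (g : Fin 3) : quatUnit g ^ 2 = a 2 := by
  revert g; decide

theorem quatUnit_inv (g : Fin 3) : (quatUnit g)⁻¹ = a 2 * quatUnit g := by
  revert g; decide

theorem quatUnit_inv_mul_add_one (g : Fin 3) :
    (quatUnit g)⁻¹ * quatUnit (g + 1) = quatUnit (g - 1) := by
  revert g; decide

theorem quatUnit_inv_mul_sub_one (g : Fin 3) :
    (quatUnit g)⁻¹ * quatUnit (g - 1) = a 2 * quatUnit (g + 1) := by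
  revert g; decide

theorem quatUnit_sub_one_mul_self_mul_add_one (g : Fin 3) :
    quatUnit (g - 1) * quatUnit g * quatUnit (g + 1) = 1 := by
  revert g; decide

theorem quatUnit_induction {P : QuaternionGroup 2 → Prop} (g : Fin 3) (one : P 1)
    (self : P (quatUnit g)) (add_one : P (quatUnit (g + 1))) (sub_one : P (quatUnit (g - 1)))
    (a_two_mul : ∀ q, P q → P (a 2 * q)) (q : QuaternionGroup 2) : P q := by
  have exhaust : ∀ (g : Fin 3) (q : QuaternionGroup 2),
      ∃ r, (r = 1 ∨ r = quatUnit g ∨ r = quatUnit (g + 1) ∨ r = quatUnit (g - 1)) ∧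
        (q = r ∨ q = a 2 * r) := by
    decide
  obtain ⟨r, hr, hq⟩ := exhaust g q
  have hPr : P r := by rcases hr with rfl | rfl | rfl | rfl <;> assumption
  rcases hq with rfl | rfl
  exacts [hPr, a_two_mul r hPr]

/-- The exponent for which `(s (g - 1) * s g * s (g + 1)) ^ exponent g q` is the value at `q` of the
Schreier function of the generator `s g` of `A`. -/
def exponent (g : Fin 3) (q : QuaternionGroup 2) : ℤ :=
  if q = quatUnit (g - 1) ∨ q = a 2 * quatUnit (g - 1) then 1
  else if q = quatUnit (g + 1) ∨ q = a 2 * quatUnit (g + 1) then -1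
  else 0

theorem exponent_a_two_mul (g : Fin 3) (q : QuaternionGroup 2) :
    exponent g (a 2 * q) = exponent g q := by
  revert g q; decide

theorem exponent_one (g : Fin 3) : exponent g 1 = 0 := by
  revert g; decide

theorem exponent_quatUnit_self (g : Fin 3) : exponent g (quatUnit g) = 0 := by
  revert g; decide

theorem exponent_quatUnit_add_one (g : Fin 3) : exponent g (quatUnit (g + 1)) = -1 := by
  revert g; decide

theorem exponent_quatUnit_sub_one (g : Fin 3) : exponent g (quatUnit (g - 1)) = 1 := by
  revert g; decide

theorem exponent_add_exponent_quatUnit_inv_mul (g : Fin 3) (q : QuaternionGroup 2) :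
    exponent g q + exponent g ((quatUnit g)⁻¹ * q) = 0 := by
  revert g q; decide

theorem lift_eq_one_of_sq_eq {G : Type*} [Group G] {f : Fin 3 → G} {c : G}
    (hf : ∀ g, f g ^ 2 = c) (hc : c ^ 2 = 1) : ∀ r ∈ q8Rels, FreeGroup.lift f r = 1 := by
  rintro r (rfl | rfl | rfl)
  · simp [pow_mul (f 0) 2 2, hf, hc]
  all_goals simp [hf]

/-- The generators `i`, `j`, `k` of the amalgam. -/
abbrev gen (g : Fin 3) : AmalgQ8 := PresentedGroup.of g

/-- The common square of the generators, which is the nontrivial element of the amalgamated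
subgroup `C₂`. -/
def genSq : AmalgQ8 := gen 0 ^ 2

theorem gen_mul_self (g : Fin 3) : gen g * gen g = genSq := by
  rw [← sq]
  fin_cases g
  · rfl
  all_goals
    refine (mul_inv_eq_one.mp (PresentedGroup.one_of_mem (rels := q8Rels) ?_)).symm
    simp [q8Rels]

theorem genSq_mul_self : genSq * genSq = 1 := by
  rw [genSq, ← pow_add]
  exact PresentedGroup.one_of_mem (rels := q8Rels) (by simp [q8Rels])

theorem gen_mul_genSq (g : Fin 3) : gen g * genSq = genSq * gen g := by
  rw [← gen_mul_self g, mul_assoc]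

theorem gen_inv (g : Fin 3) : (gen g)⁻¹ = genSq * gen g := by
  rw [inv_eq_iff_mul_eq_one, ← mul_assoc, gen_mul_genSq, mul_assoc, gen_mul_self, genSq_mul_self]

theorem gen_inv_mul_gen_inv (g h : Fin 3) : (gen g)⁻¹ * (gen h)⁻¹ = gen g * gen h := by
  calc (gen g)⁻¹ * (gen h)⁻¹ = genSq * gen g * (genSq * gen h) := by rw [gen_inv, gen_inv]
    _ = genSq * genSq * (gen g * gen h) := by
      rw [mul_assoc genSq, ← mul_assoc (gen g), gen_mul_genSq]
      simp only [mul_assoc]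
    _ = gen g * gen h := by rw [genSq_mul_self, one_mul]

/-- The element of the wreath product whose base coordinates are the values of the Schreier
function of the `g`-th generator of `A`, written in the free group. -/
def wreathGen (g : Fin 3) : FreeGroup (Fin 3) ≀ᵣ QuaternionGroup 2 :=
  ⟨fun q ↦ FreeGroup.of g ^ exponent g q, quatUnit g⟩

theorem wreathGen_sq (g : Fin 3) : wreathGen g ^ 2 = inl (a 2) := by
  ext q
  · simp [wreathGen, sq, ← zpow_add, exponent_add_exponent_quatUnit_inv_mul]
  · simp [wreathGen, sq, ← quatUnit_sq g]

/-- The homomorphism to the wreath product that becomes the Kaloujnine–Krasner embedding once the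
kernel is identified with the free group. -/
def toWreath : AmalgQ8 →* FreeGroup (Fin 3) ≀ᵣ QuaternionGroup 2 :=
  PresentedGroup.toGroup (lift_eq_one_of_sq_eq wreathGen_sq (by rw [← map_pow]; rfl))

theorem toWreath_gen (g : Fin 3) : toWreath (gen g) = wreathGen g :=
  PresentedGroup.toGroup.of _

/-- The canonical homomorphism `A → Q₈`. -/
def toQuaternion : AmalgQ8 →* QuaternionGroup 2 := rightHom.comp toWreath

theorem toQuaternion_gen (g : Fin 3) : toQuaternion (gen g) = quatUnit g :=
  congrArg right (toWreath_gen g)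

theorem toQuaternion_surjective : Function.Surjective toQuaternion := by
  have quatUnit_mem (g : Fin 3) : quatUnit g ∈ toQuaternion.range := ⟨gen g, toQuaternion_gen g⟩
  have a_two_mem : a 2 ∈ toQuaternion.range := quatUnit_sq 0 ▸ pow_mem (quatUnit_mem 0) 2
  rw [← MonoidHom.range_eq_top, Subgroup.eq_top_iff']
  exact quatUnit_induction 0 (one_mem _) (quatUnit_mem _) (quatUnit_mem _) (quatUnit_mem _)
    fun _ ↦ mul_mem a_two_mem

/-- The free generators of the kernel of `A → Q₈`: `k * i * j`, `i * j * k` and `j * k * i`. -/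
def kerGen (g : Fin 3) : toQuaternion.ker :=
  ⟨gen (g - 1) * gen g * gen (g + 1), by
    simp only [MonoidHom.mem_ker, map_mul, toQuaternion_gen,
      quatUnit_sub_one_mul_self_mul_add_one]⟩

/-- The homomorphism from the free group to the kernel of `A → Q₈` given by `kerGen`. -/
def freeToKer : FreeGroup (Fin 3) →* toQuaternion.ker := FreeGroup.lift kerGen

theorem kerToBase_comp_freeToKer :
    (kerToBase toWreath).comp freeToKer = MonoidHom.id (FreeGroup (Fin 3)) := by
  ext g
  have quatUnit_mul_quatUnit_inv : (quatUnit (g - 1) * quatUnit g)⁻¹ = quatUnit (g + 1) :=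
    inv_eq_of_mul_eq_one_right (quatUnit_sub_one_mul_self_mul_add_one g)
  calc kerToBase toWreath (freeToKer (FreeGroup.of g))
      = (toWreath (gen (g - 1) * gen g * gen (g + 1))).left 1 := by
        simp [kerToBase, freeToKer, kerGen]
    _ = FreeGroup.of (g - 1) ^ exponent (g - 1) 1
          * FreeGroup.of g ^ exponent g (a 2 * quatUnit (g - 1))
          * FreeGroup.of (g + 1) ^ exponent (g + 1) (quatUnit (g + 1)) := by
        simp [toWreath_gen, wreathGen, ← quatUnit_inv, ← quatUnit_mul_quatUnit_inv]
    _ = FreeGroup.of g := by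
        simp [exponent_one, exponent_a_two_mul, exponent_quatUnit_sub_one, exponent_quatUnit_self]

/-- The transversal of the kernel of `A → Q₈` with values `1`, `i`, `j`, `k` and their multiples by
`genSq`. The vectors are indexed by `ZMod 4`, which is `Fin 4` by definition. -/
def transversal : QuaternionGroup 2 → AmalgQ8
  | .a n => (![1, gen 0, genSq, genSq * gen 0] : Fin 4 → AmalgQ8) n
  | .xa n => (![gen 1, gen 2, genSq * gen 1, genSq * gen 2] : Fin 4 → AmalgQ8) n

theorem transversal_one : transversal 1 = 1 := rfl

theorem transversal_quatUnit (g : Fin 3) : transversal (quatUnit g) = gen g := by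
  fin_cases g <;> rfl

theorem transversal_a_two_mul (q : QuaternionGroup 2) :
    transversal (a 2 * q) = genSq * transversal q := by
  have genSq_mul_genSq_mul (b : AmalgQ8) : genSq * (genSq * b) = b := by
    rw [← mul_assoc, genSq_mul_self, one_mul]
  rcases q with n | n <;> change Fin 4 at n <;> fin_cases n
  exacts [(mul_one _).symm, rfl, genSq_mul_self.symm, (genSq_mul_genSq_mul _).symm,
    rfl, rfl, (genSq_mul_genSq_mul _).symm, (genSq_mul_genSq_mul _).symm]

theorem schreierIdentity_gen (g : Fin 3) :
    SchreierIdentity toWreath ((Subgroup.subtype _).comp freeToKer) transversal (gen g) := by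
  intro q
  have hfree : (freeToKer (FreeGroup.of g) : AmalgQ8) = gen (g - 1) * gen g * gen (g + 1) := by
    simp [freeToKer, kerGen]
  simp only [toWreath_gen, wreathGen, map_zpow, MonoidHom.comp_apply, Subgroup.subtype_apply, hfree]
  induction q using quatUnit_induction g with
  | one =>
    rw [exponent_one, zpow_zero, mul_one, mul_one, transversal_one, quatUnit_inv,
      transversal_a_two_mul, transversal_quatUnit, ← gen_inv, mul_inv_cancel]
  | self =>
    rw [exponent_quatUnit_self, zpow_zero, mul_one, inv_mul_cancel, transversal_one,
      transversal_quatUnit, mul_one]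
  | add_one =>
    rw [exponent_quatUnit_add_one, zpow_neg_one, quatUnit_inv_mul_add_one, transversal_quatUnit,
      transversal_quatUnit, mul_inv_rev, mul_inv_cancel_left, mul_inv_rev, gen_inv_mul_gen_inv]
  | sub_one =>
    rw [exponent_quatUnit_sub_one, zpow_one, quatUnit_inv_mul_sub_one, transversal_a_two_mul,
      transversal_quatUnit, transversal_quatUnit, mul_assoc, ← mul_assoc, gen_mul_self,
      ← mul_assoc (gen g), gen_mul_genSq, mul_assoc]
  | a_two_mul q hq =>
    have a_two_left_comm : (quatUnit g)⁻¹ * (a 2 * q) = a 2 * ((quatUnit g)⁻¹ * q) :=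
      (commute_a_natCast (quatUnit g)⁻¹).left_comm q
    rw [exponent_a_two_mul, a_two_left_comm, transversal_a_two_mul, transversal_a_two_mul,
      mul_assoc, hq, ← mul_assoc, ← mul_assoc, gen_mul_genSq]

end AmalgQ8

/-- the canonical homomorphism `p : A → Q₈` induced by the inclusions of the
three cyclic subgroups `H_i = ⟨i⟩`, `H_j = ⟨j⟩`, `H_k = ⟨k⟩` of the quaternion group `Q₈`
(i.e. the homomorphism sending the generators of the presentation to `i`, `j`, `k`) is
surjective, and its kernel is a free group of rank `3`. -/
theorem q8_amalgam_kernel :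
    ∃ p : AmalgQ8 →* QuaternionGroup 2,
      (p (PresentedGroup.of 0) = QuaternionGroup.a 1 ∧
       p (PresentedGroup.of 1) = QuaternionGroup.xa 0 ∧
       p (PresentedGroup.of 2) = QuaternionGroup.xa 1) ∧
      Function.Surjective p ∧
      Nonempty (p.ker ≃* FreeGroup (Fin 3)) :=
  ⟨AmalgQ8.toQuaternion,
    ⟨AmalgQ8.toQuaternion_gen 0, AmalgQ8.toQuaternion_gen 1, AmalgQ8.toQuaternion_gen 2⟩,
    AmalgQ8.toQuaternion_surjective,
    ⟨kerEquivBase AmalgQ8.toWreath AmalgQ8.freeToKer (PresentedGroup.closure_range_of q8Rels)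
      AmalgQ8.transversal_one (Set.forall_mem_range.2 AmalgQ8.schreierIdentity_gen)
      AmalgQ8.kerToBase_comp_freeToKer⟩⟩
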